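/- Let ω = e^{2πi/3}, Λ = ℤω ⊕ ℤ, ⟨z,w⟩ := Re(z·conj(w)), K = 4π/3. Let U : ℂ → ℂ be real-analytic with U(z+γ) = e^{i⟨γ,K⟩}U(z) for γ ∈ Λ and U(ωz) = ωU(z), let α ∈ ℂ and p ∈ ℂ, and let V_p denote the complex vector space of real-analytic u = (u₁,u₂) : ℂ → ℂ² satisfying D(α)u = 0 on ℂ together with the Floquet conditions u₁(z+γ) = e^{i⟨p−K,γ⟩}u₁(z) and u₂(z+γ) = e^{i⟨p+K,γ⟩}u₂(z) for all γ ∈ Λ. If some u ∈ V_p with u not identically zero vanishes at n points z₁,…,z_n ∈ ℂ that are pairwise non-congruent modulo Λ, then V_p contains n linearly independent elements (so dim_ℂ V_p ≥ n). -/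

import Mathlib

open Complex

noncomputable section

/-- `ω = e^{2πi/3}`. -/
def ω : ℂ := Complex.exp (2 * (Real.pi : ℂ) * Complex.I / 3)

/-- The hexagonal lattice `Λ = ℤω ⊕ ℤ`. -/
def inΛ (γ : ℂ) : Prop := ∃ m n : ℤ, γ = (m : ℂ) * ω + (n : ℂ)

/-- The pairing `⟨z,w⟩ = Re (z ⬝ conj w)`. -/
def pairing (z w : ℂ) : ℝ := (z * (starRingEnd ℂ) w).re

/-- The Dirac momentum `K = 4π/3`. -/
def Kpt : ℂ := 4 * (Real.pi : ℂ) / 3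

/-- `2 D_{z̄} u = -i (∂_x u + i ∂_y u)`. -/
def Dbar2 (u : ℂ → ℂ) : ℂ → ℂ := fun z =>
  -Complex.I * (fderiv ℝ u z 1 + Complex.I * fderiv ℝ u z Complex.I)

/-- Real-analyticity of a map `ℂ ≅ ℝ² → ℂ`. -/
def RealAnalytic (f : ℂ → ℂ) : Prop := ∀ z : ℂ, AnalyticAt ℝ f z

/-- Membership in (the smooth-function model of) the kernel `V_p` of `D(α)` on `L²_p`:
real-analytic solutions of `D(α)u = 0` with the Floquet conditions of momentum `p`. -/
def memVp (U : ℂ → ℂ) (α p : ℂ) (u : (ℂ → ℂ) × (ℂ → ℂ)) : Prop :=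
  RealAnalytic u.1 ∧ RealAnalytic u.2 ∧
  (∀ z : ℂ, Dbar2 u.1 z + α * U z * u.2 z = 0) ∧
  (∀ z : ℂ, α * U (-z) * u.1 z + Dbar2 u.2 z = 0) ∧
  (∀ γ : ℂ, inΛ γ → ∀ z : ℂ,
    u.1 (z + γ) = Complex.exp (Complex.I * (pairing (p - Kpt) γ : ℂ)) * u.1 z) ∧
  (∀ γ : ℂ, inΛ γ → ∀ z : ℂ,
    u.2 (z + γ) = Complex.exp (Complex.I * (pairing (p + Kpt) γ : ℂ)) * u.2 z)

open Filter Topology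

lemma lem_div (F : ℂ × ℂ → ℂ) (hF : AnalyticAt ℂ F 0) :
    ∃ G : ℂ × ℂ → ℂ, AnalyticAt ℂ G 0 ∧
      ∀ᶠ v in 𝓝 (0 : ℂ × ℂ), F v - F (0, v.2) = v.1 * G v := by
  obtain ⟨q, r, hq⟩ := hF
  let P : (ℂ × ℂ) →L[ℂ] (ℂ × ℂ) :=
    (ContinuousLinearMap.inr ℂ ℂ ℂ).comp (ContinuousLinearMap.snd ℂ ℂ ℂ)
  have hPv : ∀ v, P v = (0, v.2) := fun v => rfl
  have hP1 : ‖P‖ ≤ 1 := by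
    refine ContinuousLinearMap.opNorm_le_bound _ zero_le_one fun v => ?_
    rw [hPv, one_mul, Prod.norm_def, Prod.norm_def]
    simp
  let g : FormalMultilinearSeries ℂ (ℂ × ℂ) ℂ := fun n =>
    ∑ i : Fin (n + 1), ((q (n + 1)).compContinuousLinearMap
      (fun k => if k ≤ i then ContinuousLinearMap.id ℂ (ℂ × ℂ) else P)).curryMid i (1, 0)
  have hgn : ∀ n, ‖g n‖ ≤ (n + 1) * ‖q (n + 1)‖ := by
    intro n
    refine (norm_sum_le _ _).trans ?_
    have : ∀ i ∈ (Finset.univ : Finset (Fin (n+1))),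
        ‖((q (n + 1)).compContinuousLinearMap
      (fun k => if k ≤ i then ContinuousLinearMap.id ℂ (ℂ × ℂ) else P)).curryMid i (1, 0)‖
        ≤ ‖q (n+1)‖ := by
      intro i _
      refine (ContinuousLinearMap.le_opNorm _ _).trans ?_
      rw [ContinuousMultilinearMap.norm_curryMid]
      have h1 : ‖((1 : ℂ), (0 : ℂ))‖ = 1 := by simp [Prod.norm_def]
      rw [h1, mul_one]
      refine (ContinuousMultilinearMap.norm_compContinuousLinearMap_le _ _).trans ?_
      refine mul_le_of_le_one_right (norm_nonneg _) ?_
      refine Finset.prod_le_one (fun _ _ => norm_nonneg _) fun k _ => ?_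
      split_ifs
      · exact ContinuousLinearMap.norm_id_le
      · exact hP1
    refine (Finset.sum_le_sum this).trans ?_
    simp
  have hgv : ∀ n v, q (n + 1) (fun _ => v) - q (n + 1) (fun _ => P v) = v.1 * g n (fun _ => v) := by
    intro n v
    let t : ℕ → ℂ := fun i => q (n + 1) (fun k => if (k : ℕ) < i then v else P v)
    have h0 : t 0 = q (n + 1) (fun _ => P v) := by simp [t]
    have h1 : t (n + 1) = q (n + 1) (fun _ => v) := by
      simp only [t]; congr 1; ext1 k; simp [k.2]
    rw [← h0, ← h1, ← Finset.sum_range_sub, Finset.sum_range]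
    simp only [g, _root_.sum_apply, Finset.mul_sum]
    refine Finset.sum_congr rfl fun i _ => ?_
    let m : Fin (n + 1) → ℂ × ℂ := fun k => if (k : ℕ) < i then v else P v
    have e1 : t (i + 1) = q (n + 1) (Function.update m i v) := by
      simp only [t]; congr 1; ext1 k
      by_cases hk : k = i
      · subst hk; simp
      · have : (k : ℕ) ≠ i := fun h => hk (Fin.ext h)
        have h2 : (k : ℕ) < i + 1 ↔ (k : ℕ) < i := by omega
        simp [m, hk, h2]
    have e2 : t i = q (n + 1) (Function.update m i (P v)) := by
      simp only [t]; congr 1; ext1 k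
      by_cases hk : k = i
      · subst hk; simp
      · simp [m, hk]
    rw [e1, e2, ← ContinuousMultilinearMap.map_update_sub]
    have e3 : v - P v = v.1 • ((1 : ℂ), (0 : ℂ)) := by
      rw [hPv]; ext <;> simp
    rw [e3, ContinuousMultilinearMap.map_update_smul, smul_eq_mul]
    congr 1
    rw [ContinuousMultilinearMap.curryMid_apply, ContinuousMultilinearMap.compContinuousLinearMap_apply]
    congr 1; ext1 k
    by_cases hk : k = i
    · subst hk; simp
    · obtain ⟨j, rfl⟩ := Fin.exists_succAbove_eq hk
      have : (i.succAbove j ≤ i) ↔ ((i.succAbove j : Fin (n+1)) : ℕ) < i := by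
        rw [← Fin.lt_def]; exact ⟨fun h => lt_of_le_of_ne h hk, le_of_lt⟩
      simp only [Function.update_of_ne hk, m, Fin.insertNth_apply_succAbove, this]
      split_ifs <;> rfl
  obtain ⟨C, a, hC, ha, hb⟩ : ∃ C a : ℝ, 0 < C ∧ 0 < a ∧ ∀ n, ‖q n‖ ≤ C * a ^ n := by
    obtain ⟨C, a, hC, ha, h⟩ := q.le_mul_pow_of_radius_pos (hq.r_pos.trans_le hq.r_le)
    exact ⟨C, a, hC, ha, h⟩
  have hrad : 0 < g.radius := by
    have hpos : (0 : ℝ) < (2 * a)⁻¹ := by positivity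
    refine lt_of_lt_of_le ?_ (g.le_radius_of_bound (r := ⟨(2 * a)⁻¹, hpos.le⟩) (C * a) fun n => ?_)
    · exact ENNReal.coe_pos.2 (show (0 : NNReal) < ⟨_, hpos.le⟩ from hpos)
    · have h2 : ((n : ℝ) + 1) ≤ 2 ^ n := by exact_mod_cast Nat.lt_two_pow_self
      calc ‖g n‖ * ((2 * a)⁻¹) ^ n ≤ ((2 ^ n) * (C * a ^ (n + 1))) * ((2 * a)⁻¹) ^ n := by
            gcongr
            exact (hgn n).trans (mul_le_mul h2 (hb _) (norm_nonneg _) (by positivity))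
        _ = C * a := by
            rw [inv_pow, mul_pow, pow_succ]; field_simp
  have hG := g.hasFPowerSeriesOnBall hrad
  refine ⟨g.sum, hG.analyticAt, ?_⟩
  have hc : Tendsto P (𝓝 0) (𝓝 0) := by simpa using P.continuous.tendsto 0
  filter_upwards [Metric.eball_mem_nhds (0 : ℂ × ℂ) hq.r_pos,
    hc (Metric.eball_mem_nhds (0 : ℂ × ℂ) hq.r_pos),
    Metric.eball_mem_nhds (0 : ℂ × ℂ) hrad] with v h1 h2 h3
  have s1 := hq.hasSum h1
  have s2 := hq.hasSum (Set.mem_preimage.1 h2)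
  have s3 := hG.hasSum h3
  simp only [zero_add] at s1 s2 s3
  have s4 := (s1.sub s2)
  rw [← hasSum_nat_add_iff' 1] at s4
  have hz : q 0 (fun _ => v) = q 0 (fun _ => P v) := by congr 1; ext1 k; exact k.elim0
  simp only [hgv, Finset.range_one, Finset.sum_singleton, hz, sub_self, sub_zero] at s4
  have := (s3.mul_left v.1).unique s4
  rw [← hPv, this]

def l0 : (ℂ × ℂ) →L[ℂ] ℂ :=
  (1 / 2 : ℂ) • (ContinuousLinearMap.fst ℂ ℂ ℂ + ContinuousLinearMap.snd ℂ ℂ ℂ)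

def l1 : (ℂ × ℂ) →L[ℂ] ℂ :=
  (-I / 2 : ℂ) • (ContinuousLinearMap.fst ℂ ℂ ℂ - ContinuousLinearMap.snd ℂ ℂ ℂ)

lemma l0_apply (h : ℂ) : l0 (h, (starRingEnd ℂ) h) = (h.re : ℂ) := by
  have := Complex.add_conj h
  simp [l0]
  push_cast at this
  linear_combination (1 / 2 : ℂ) * this

lemma l1_apply (h : ℂ) : l1 (h, (starRingEnd ℂ) h) = (h.im : ℂ) := by
  have := Complex.sub_conj h
  simp only [l1, _root_.smul_apply, _root_.sub_apply,
    ContinuousLinearMap.coe_fst', ContinuousLinearMap.coe_snd', smul_eq_mul, this]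
  push_cast
  linear_combination (-(h.im : ℂ)) * I_mul_I

lemma lem_complexify (f : ℂ → ℂ) (z₀ : ℂ) (hf : AnalyticAt ℝ f z₀) :
    ∃ F : ℂ × ℂ → ℂ, AnalyticAt ℂ F 0 ∧
      ∀ᶠ h in 𝓝 (0 : ℂ), f (z₀ + h) = F (h, (starRingEnd ℂ) h) := by
  obtain ⟨p, r, hp⟩ := hf
  let L : Fin 2 → ((ℂ × ℂ) →L[ℂ] ℂ) := ![l0, l1]
  let b : Fin 2 → ℂ := ![1, I]
  have hL : ∃ M : ℝ, 0 < M ∧ ∀ s, ‖L s‖ ≤ M := by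
    refine ⟨‖L 0‖ + ‖L 1‖ + 1, by positivity, fun s => ?_⟩
    fin_cases s
    · simp only [Fin.zero_eta]; linarith [norm_nonneg (L 1)]
    · simp only [Fin.mk_one]; linarith [norm_nonneg (L 0)]
  obtain ⟨M, hM, hLM⟩ := hL
  have hbn : ∀ s, ‖b s‖ = 1 := by intro s; fin_cases s <;> simp [b]
  let q : FormalMultilinearSeries ℂ (ℂ × ℂ) ℂ := fun n =>
    ∑ σ : Fin n → Fin 2, (p n fun i => b (σ i)) •
      (ContinuousMultilinearMap.mkPiAlgebra ℂ (Fin n) ℂ).compContinuousLinearMap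
        (fun i => L (σ i))
  have hqn : ∀ n, ‖q n‖ ≤ ‖p n‖ * (2 * M) ^ n := by
    intro n
    refine (norm_sum_le _ _).trans ?_
    have : ∀ σ ∈ (Finset.univ : Finset (Fin n → Fin 2)),
        ‖(p n fun i => b (σ i)) •
      (ContinuousMultilinearMap.mkPiAlgebra ℂ (Fin n) ℂ).compContinuousLinearMap
        (fun i => L (σ i))‖ ≤ ‖p n‖ * M ^ n := by
      intro σ _
      rw [norm_smul]
      refine mul_le_mul ?_ ?_ (norm_nonneg _) (norm_nonneg _)
      · refine ((p n).le_opNorm _).trans ?_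
        simp [hbn]
      · refine (ContinuousMultilinearMap.norm_compContinuousLinearMap_le _ _).trans ?_
        rw [ContinuousMultilinearMap.norm_mkPiAlgebra, one_mul]
        refine (Finset.prod_le_prod (fun _ _ => norm_nonneg _) (fun i _ => hLM (σ i))).trans ?_
        simp
    refine (Finset.sum_le_sum this).trans ?_
    simp only [Finset.sum_const, Finset.card_univ, Fintype.card_fun, Fintype.card_fin, nsmul_eq_mul]
    rw [mul_pow]; push_cast; apply le_of_eq; ring
  have hqv : ∀ n (h : ℂ), q n (fun _ => (h, (starRingEnd ℂ) h)) = p n (fun _ => h) := by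
    intro n h
    have hh : h = ∑ s : Fin 2, (![h.re, h.im] s) • b s := by
      simp [b, Fin.sum_univ_two]
    conv_rhs => rw [hh]
    have := (p n).toMultilinearMap.map_sum (fun (_ : Fin n) (s : Fin 2) => (![h.re, h.im] s) • b s)
    refine Eq.trans ?_ this.symm
    simp only [q, _root_.sum_apply]
    refine Finset.sum_congr rfl fun σ _ => ?_
    rw [MultilinearMap.map_smul_univ]
    have hL' : ∀ s : Fin 2, L s (h, (starRingEnd ℂ) h) = ((![h.re, h.im] s : ℝ) : ℂ) := by
      intro s; fin_cases s
      · exact l0_apply h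
      · exact l1_apply h
    simp only [_root_.smul_apply,
      ContinuousMultilinearMap.compContinuousLinearMap_apply,
      ContinuousMultilinearMap.mkPiAlgebra_apply, hL', smul_eq_mul, Complex.real_smul,
      Complex.ofReal_prod]
    rw [mul_comm]; rfl
  obtain ⟨C, a, hC, ha, hb⟩ : ∃ C a : ℝ, 0 < C ∧ 0 < a ∧ ∀ n, ‖p n‖ ≤ C * a ^ n := by
    obtain ⟨C, a, hC, ha, h⟩ := p.le_mul_pow_of_radius_pos (hp.r_pos.trans_le hp.r_le)
    exact ⟨C, a, hC, ha, h⟩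
  have hrad : 0 < q.radius := by
    have hpos : (0 : ℝ) < (a * (2 * M))⁻¹ := by positivity
    refine lt_of_lt_of_le ?_ (q.le_radius_of_bound (r := ⟨_, hpos.le⟩) C fun n => ?_)
    · exact ENNReal.coe_pos.2 (show (0 : NNReal) < ⟨_, hpos.le⟩ from hpos)
    · calc ‖q n‖ * ((a * (2 * M))⁻¹) ^ n ≤ ((C * a ^ n) * (2 * M) ^ n) * ((a * (2 * M))⁻¹) ^ n := by
            gcongr
            exact (hqn n).trans (mul_le_mul_of_nonneg_right (hb _) (by positivity))
        _ = C := by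
            rw [inv_pow, mul_pow a]; field_simp
  have hG := q.hasFPowerSeriesOnBall hrad
  refine ⟨q.sum, hG.analyticAt, ?_⟩
  have hc : Tendsto (fun h : ℂ => (h, (starRingEnd ℂ) h)) (𝓝 0) (𝓝 0) := by
    have : Continuous (fun h : ℂ => (h, (starRingEnd ℂ) h)) := by fun_prop
    simpa [← Prod.zero_eq_mk] using this.tendsto 0
  filter_upwards [Metric.eball_mem_nhds (0 : ℂ) hp.r_pos,
    hc (Metric.eball_mem_nhds (0 : ℂ × ℂ) hrad)] with h h1 h2
  have s1 := hp.hasSum h1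
  have s2 := hG.hasSum (Set.mem_preimage.1 h2)
  simp only [zero_add, hqv] at s2
  exact s1.unique s2

lemma ra_Dbar2_at {f : ℂ → ℂ} {z : ℂ} (hf : AnalyticAt ℝ f z) : AnalyticAt ℝ (Dbar2 f) z := by
  have h1 : ∀ v : ℂ, AnalyticAt ℝ (fun z => fderiv ℝ f z v) z := fun v =>
    (ContinuousLinearMap.analyticAt (ContinuousLinearMap.apply ℝ ℂ v) _).comp hf.fderiv
  exact analyticAt_const.mul ((h1 1).add (analyticAt_const.mul (h1 I)))

lemma Dbar2_congr {f g : ℂ → ℂ} {z : ℂ} (h : f =ᶠ[𝓝 z] g) : Dbar2 f z = Dbar2 g z := by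
  simp only [Dbar2, h.fderiv_eq]

lemma Dbar2_translate (f : ℂ → ℂ) (z₀ h : ℂ) :
    Dbar2 (fun h => f (z₀ + h)) h = Dbar2 f (z₀ + h) := by
  simp only [Dbar2, fderiv_comp_add_left]

lemma Dbar2_add {f g : ℂ → ℂ} {z : ℂ} (hf : DifferentiableAt ℝ f z) (hg : DifferentiableAt ℝ g z) :
    Dbar2 (fun z => f z + g z) z = Dbar2 f z + Dbar2 g z := by
  simp only [Dbar2, fderiv_fun_add hf hg, _root_.add_apply]
  ring

lemma Dbar2_mul {f g : ℂ → ℂ} {z : ℂ} (hf : DifferentiableAt ℝ f z) (hg : DifferentiableAt ℝ g z) :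
    Dbar2 (fun z => f z * g z) z = Dbar2 f z * g z + f z * Dbar2 g z := by
  simp only [Dbar2, fderiv_fun_mul hf hg, _root_.add_apply, _root_.smul_apply, smul_eq_mul]
  ring

lemma Dbar2_holo {f : ℂ → ℂ} {z : ℂ} (hf : DifferentiableAt ℂ f z) : Dbar2 f z = 0 := by
  have : fderiv ℝ f z = (fderiv ℂ f z).restrictScalars ℝ :=
    (hf.hasFDerivAt.restrictScalars ℝ).fderiv
  have h2 : fderiv ℂ f z I = I * fderiv ℂ f z 1 := by
    have := (fderiv ℂ f z).map_smul I 1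
    simpa using this
  simp only [Dbar2, this, ContinuousLinearMap.coe_restrictScalars', h2]
  linear_combination (-I * fderiv ℂ f z 1) * I_mul_I

lemma Dbar2_diag {F : ℂ × ℂ → ℂ} {h : ℂ} (hF : DifferentiableAt ℂ F (h, (starRingEnd ℂ) h)) :
    Dbar2 (fun h => F (h, (starRingEnd ℂ) h)) h
      = -2 * I * fderiv ℂ F (h, (starRingEnd ℂ) h) (0, 1) := by
  have h1 : HasFDerivAt (fun h : ℂ => (h, (starRingEnd ℂ) h))
      ((ContinuousLinearMap.id ℝ ℂ).prod (Complex.conjCLE : ℂ →L[ℝ] ℂ)) h :=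
    (hasFDerivAt_id h).prodMk (Complex.conjCLE : ℂ →L[ℝ] ℂ).hasFDerivAt
  have h2 := (HasFDerivAt.comp h (hF.hasFDerivAt.restrictScalars ℝ) h1).fderiv
  have h3 : fderiv ℝ (fun h => F (h, (starRingEnd ℂ) h)) h = _ := h2
  simp only [Dbar2, h3]
  set L := fderiv ℂ F (h, (starRingEnd ℂ) h)
  have e : ∀ v : ℂ, (L.restrictScalars ℝ ∘SL
    ((ContinuousLinearMap.id ℝ ℂ).prod (Complex.conjCLE : ℂ →L[ℝ] ℂ))) v
      = L (v, (starRingEnd ℂ) v) := fun v => rfl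
  rw [e, e]
  have e2 : L (1, (starRingEnd ℂ) 1) + I * L (I, (starRingEnd ℂ) I) = 2 * L (0, 1) := by
    rw [← smul_eq_mul, ← smul_eq_mul, ← L.map_smul, ← L.map_smul, ← L.map_add]
    congr 1
    ext
    · simp
    · simp; norm_num
  rw [e2]; ring

lemma tendsto_diag : Tendsto (fun h : ℂ => (h, (starRingEnd ℂ) h)) (𝓝 0) (𝓝 0) := by
  have : Continuous (fun h : ℂ => (h, (starRingEnd ℂ) h)) := by fun_prop
  simpa [← Prod.zero_eq_mk] using this.tendsto 0

lemma tendsto_tr (z₀ : ℂ) : Tendsto (fun h : ℂ => z₀ + h) (𝓝 0) (𝓝 z₀) := by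
  have : Continuous (fun h : ℂ => z₀ + h) := by fun_prop
  simpa using this.tendsto 0

lemma lem_ind (u₁ u₂ a b : ℂ → ℂ) (z₀ : ℂ) (hu₁ : RealAnalytic u₁) (hu₂ : RealAnalytic u₂)
    (ha : RealAnalytic a) (hb : RealAnalytic b)
    (h₁ : ∀ z, Dbar2 u₁ z = a z * u₂ z) (h₂ : ∀ z, Dbar2 u₂ z = b z * u₁ z)
    (z₁ : u₁ z₀ = 0) (z₂ : u₂ z₀ = 0) (k : ℕ) :
    ∀ F : ℂ × ℂ → ℂ, AnalyticAt ℂ F 0 → ∀ A B : ℂ → ℂ, RealAnalytic A → RealAnalytic B →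
      (∀ᶠ h in 𝓝 (0 : ℂ), F (h, (starRingEnd ℂ) h) = A (z₀ + h) * u₁ (z₀ + h)
        + B (z₀ + h) * u₂ (z₀ + h)) →
      iteratedDeriv k (fun ζ => F (0, ζ)) 0 = 0 := by
  induction k with
  | zero =>
    intro F hF A B hA hB h
    have := h.self_of_nhds
    simpa [z₁, z₂] using this
  | succ k ih =>
    intro F hF A B hA hB h
    have hF2 : AnalyticAt ℂ (fun v => fderiv ℂ F v (0, 1)) 0 :=
      (ContinuousLinearMap.analyticAt (ContinuousLinearMap.apply ℂ ℂ ((0, 1) : ℂ × ℂ)) _).comp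
        hF.fderiv
    have hev : deriv (fun ζ => F (0, ζ)) =ᶠ[𝓝 0] fun ζ => fderiv ℂ F (0, ζ) (0, 1) := by
      have ht : Tendsto (fun ζ : ℂ => ((0 : ℂ), ζ)) (𝓝 0) (𝓝 0) := by
        have : Continuous (fun ζ : ℂ => ((0 : ℂ), ζ)) := by fun_prop
        simpa [← Prod.zero_eq_mk] using this.tendsto 0
      filter_upwards [ht.eventually hF.eventually_analyticAt] with ζ hζ
      have h1 : HasDerivAt (fun ζ : ℂ => ((0 : ℂ), ζ)) ((0 : ℂ), (1 : ℂ)) ζ :=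
        (hasDerivAt_const ζ (0 : ℂ)).prodMk (hasDerivAt_id ζ)
      exact (hζ.differentiableAt.hasFDerivAt.comp_hasDerivAt ζ h1).deriv
    rw [iteratedDeriv_succ', hev.iteratedDeriv_eq k]
    refine ih _ hF2 (fun z => I / 2 * (Dbar2 A z + B z * b z))
      (fun z => I / 2 * (Dbar2 B z + A z * a z)) ?_ ?_ ?_
    · exact fun z => analyticAt_const.mul ((ra_Dbar2_at (hA z)).add ((hB z).mul (hb z)))
    · exact fun z => analyticAt_const.mul ((ra_Dbar2_at (hB z)).add ((hA z).mul (ha z)))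
    · filter_upwards [tendsto_diag.eventually hF.eventually_analyticAt, h.eventually_nhds]
        with h hh1 hh2
      have e1 := Dbar2_diag hh1.differentiableAt
      rw [Dbar2_congr hh2, Dbar2_translate (fun z => A z * u₁ z + B z * u₂ z),
        Dbar2_add (f := fun z => A z * u₁ z) (g := fun z => B z * u₂ z) ((hA _).mul (hu₁ _)).differentiableAt ((hB _).mul (hu₂ _)).differentiableAt,
        Dbar2_mul (hA _).differentiableAt (hu₁ _).differentiableAt,
        Dbar2_mul (hB _).differentiableAt (hu₂ _).differentiableAt, h₁, h₂] at e1
      linear_combination (-I / 2) * e1 + fderiv ℂ F (h, (starRingEnd ℂ) h) (0, 1) * I_mul_I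

lemma lem_local (u₁ u₂ a b : ℂ → ℂ) (z₀ : ℂ) (hu₁ : RealAnalytic u₁) (hu₂ : RealAnalytic u₂)
    (ha : RealAnalytic a) (hb : RealAnalytic b)
    (h₁ : ∀ z, Dbar2 u₁ z = a z * u₂ z) (h₂ : ∀ z, Dbar2 u₂ z = b z * u₁ z)
    (z₁ : u₁ z₀ = 0) (z₂ : u₂ z₀ = 0) :
    ∃ w : ℂ → ℂ, AnalyticAt ℝ w z₀ ∧ ∀ᶠ z in 𝓝 z₀, u₁ z = (z - z₀) * w z := by
  obtain ⟨F, hF, hFu⟩ := lem_complexify u₁ z₀ (hu₁ z₀)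
  have hall := fun k => lem_ind u₁ u₂ a b z₀ hu₁ hu₂ ha hb h₁ h₂ z₁ z₂ k F hF (fun _ => 1)
    (fun _ => 0) (fun _ => analyticAt_const) (fun _ => analyticAt_const) (by simpa using hFu.mono fun _ h => h.symm)
  have hf : AnalyticAt ℂ (fun ζ : ℂ => F (0, ζ)) 0 := by
    refine AnalyticAt.comp_of_eq (g := F) (f := fun ζ : ℂ => ((0 : ℂ), ζ)) (y := 0) hF ?_ rfl
    exact analyticAt_const.prod analyticAt_id
  have hz : ∀ᶠ ζ in 𝓝 (0 : ℂ), F (0, ζ) = 0 := by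
    rw [← analyticOrderAt_eq_top, ENat.eq_top_iff_forall_ge]
    intro m
    rw [natCast_le_analyticOrderAt_iff_iteratedDeriv_eq_zero hf]
    exact fun i _ => hall i
  obtain ⟨G, hG, hGv⟩ := lem_div F hF
  refine ⟨fun z => G (z - z₀, (starRingEnd ℂ) (z - z₀)), ?_, ?_⟩
  · refine AnalyticAt.comp_of_eq (g := G) (f := fun z : ℂ => (z - z₀, (starRingEnd ℂ) (z - z₀)))
      (y := 0) (hG.restrictScalars (𝕜 := ℝ)) ?_ (by simp)
    have h1 : AnalyticAt ℝ (fun z : ℂ => z - z₀) z₀ := analyticAt_id.sub analyticAt_const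
    exact h1.prod (((Complex.conjCLE : ℂ →L[ℝ] ℂ).analyticAt _).comp h1)
  · have ht : Tendsto (fun z : ℂ => z - z₀) (𝓝 z₀) (𝓝 0) := by
      have : Continuous (fun z : ℂ => z - z₀) := by fun_prop
      simpa using this.tendsto z₀
    have hc : Tendsto (starRingEnd ℂ) (𝓝 0) (𝓝 0) := by
      simpa using Complex.continuous_conj.tendsto 0
    filter_upwards [ht.eventually hFu, ht.eventually (tendsto_diag.eventually hGv),
      ht.eventually (hc.eventually hz)] with z e1 e2 e3
    simp only [e3, sub_zero] at e2
    rw [← e2, ← e1]; ring_nf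

def gg (x : ℂ) : ℂ := (Complex.exp (2 * Real.pi * I * x) - 1)⁻¹

def tm (a b z : ℂ) (m : ℤ) : ℂ := gg (z - a - m * ω) - gg (z - b - m * ω)

def FF (a b z : ℂ) : ℂ := ∑' m : ℤ, tm a b z m

lemma gg_add_int (x : ℂ) (n : ℤ) : gg (x + n) = gg x := by
  have : 2 * Real.pi * I * (x + n) = 2 * Real.pi * I * x + n * (2 * Real.pi * I) := by ring
  rw [gg, gg, this, Complex.exp_periodic.int_mul n]

lemma FF_per (a b z γ : ℂ) (hγ : inΛ γ) : FF a b (z + γ) = FF a b z := by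
  obtain ⟨k, n, rfl⟩ := hγ
  rw [FF, FF, ← (Equiv.addRight k).tsum_eq (tm a b (z + (k * ω + n)))]
  congr 1; ext1 m
  simp only [tm, Equiv.coe_addRight]
  rw [← gg_add_int (z - a - m * ω) n, ← gg_add_int (z - b - m * ω) n]
  push_cast
  ring_nf

lemma omega_im : ω.im = √3 / 2 := by
  have : (2 * (Real.pi : ℂ) * Complex.I / 3) = ((2 * Real.pi / 3 : ℝ) : ℂ) * I := by
    push_cast; ring
  rw [ω, this, Complex.exp_ofReal_mul_I_im]
  have h : (2 * Real.pi / 3) = Real.pi - Real.pi / 3 := by ring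
  rw [h, Real.sin_pi_sub, Real.sin_pi_div_three]

lemma omega_im_pos : 0 < ω.im := by rw [omega_im]; positivity

lemma int_of_mul_omega (m n : ℤ) (h : (m : ℂ) * ω = n) : m = 0 := by
  have := congrArg Complex.im h
  simp at this
  rcases this with h | h
  · exact h
  · exact absurd h omega_im_pos.ne'

lemma den_zero_iff (x : ℂ) : Complex.exp (2 * Real.pi * I * x) - 1 = 0 ↔ ∃ n : ℤ, x = n := by
  rw [sub_eq_zero, Complex.exp_eq_one_iff]
  refine exists_congr fun n => ?_
  have := Complex.two_pi_I_ne_zero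
  constructor
  · intro h
    apply mul_left_cancel₀ this; rw [h]; ring
  · rintro rfl; ring

lemma gg_mero (c z₀ : ℂ) : MeromorphicAt (fun z => gg (z - c)) z₀ := by
  unfold gg
  have : AnalyticAt ℂ (fun z : ℂ => Complex.exp (2 * Real.pi * I * (z - c)) - 1) z₀ := by fun_prop
  exact this.meromorphicAt.inv

lemma gg_analytic (c z₀ : ℂ) (h : ¬ ∃ n : ℤ, z₀ - c = n) : AnalyticAt ℂ (fun z => gg (z - c)) z₀ := by
  unfold gg
  have : AnalyticAt ℂ (fun z : ℂ => Complex.exp (2 * Real.pi * I * (z - c)) - 1) z₀ := by fun_prop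
  exact this.inv (fun h' => h ((den_zero_iff _).1 h'))

/-- at a pole -/
lemma gg_pole (c z₀ : ℂ) (h : ∃ n : ℤ, z₀ - c = n) : ∃ k : ℂ → ℂ, AnalyticAt ℂ k z₀ ∧ k z₀ ≠ 0 ∧
    ∀ᶠ z in 𝓝[≠] z₀, (z - z₀) * gg (z - c) = k z := by
  have hd : AnalyticAt ℂ (fun z : ℂ => Complex.exp (2 * Real.pi * I * (z - c)) - 1) z₀ := by fun_prop
  obtain ⟨q, hq⟩ := id hd
  have hz : Complex.exp (2 * Real.pi * I * (z₀ - c)) - 1 = 0 := (den_zero_iff _).2 h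
  have hds : AnalyticAt ℂ (dslope (fun z : ℂ => Complex.exp (2 * Real.pi * I * (z - c)) - 1) z₀) z₀ :=
    ⟨_, hq.has_fpower_series_dslope_fslope⟩
  have hne : dslope (fun z : ℂ => Complex.exp (2 * Real.pi * I * (z - c)) - 1) z₀ z₀ ≠ 0 := by
    rw [dslope_same]
    have h1 : HasDerivAt (fun z : ℂ => Complex.exp (2 * Real.pi * I * (z - c)) - 1)
        (Complex.exp (2 * Real.pi * I * (z₀ - c)) * (2 * Real.pi * I * 1)) z₀ :=
      ((((hasDerivAt_id z₀).sub_const c).const_mul (2 * Real.pi * I)).cexp).sub_const 1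
    rw [h1.deriv]
    have := Complex.two_pi_I_ne_zero
    simp [Complex.exp_ne_zero, Real.pi_ne_zero]
  refine ⟨_, hds.inv hne, inv_ne_zero hne, ?_⟩
  filter_upwards [self_mem_nhdsWithin] with z hzz
  have hzz' : z ≠ z₀ := hzz
  simp only [Pi.inv_apply]
  rw [dslope_of_ne _ hzz', slope_def_field, hz, sub_zero, gg, inv_div, div_eq_mul_inv]

lemma gg_bound (x : ℂ) (m : ℤ) (B : ℝ) (hB : |x.im| ≤ B)
    (hs : Real.exp (2 * Real.pi * B) * Real.exp (-2 * Real.pi * ω.im) ^ m.natAbs ≤ 1 / 2) :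
    ‖gg (x - m * ω) + (if 0 < m then 0 else 1)‖ ≤
      2 * (Real.exp (2 * Real.pi * B) * Real.exp (-2 * Real.pi * ω.im) ^ m.natAbs) := by
  set t := Real.exp (2 * Real.pi * B) * Real.exp (-2 * Real.pi * ω.im) ^ m.natAbs with ht
  have htexp : t = Real.exp (2 * Real.pi * B - 2 * Real.pi * ω.im * m.natAbs) := by
    rw [ht, ← Real.exp_nat_mul, ← Real.exp_add]; ring_nf
  set E := Complex.exp (2 * Real.pi * I * (x - m * ω)) with hE
  have hn : ‖E‖ = Real.exp (-2 * Real.pi * x.im + 2 * Real.pi * ω.im * m) := by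
    rw [hE, Complex.norm_exp]; congr 1
    simp; ring
  have htpos : 0 < t := by rw [htexp]; positivity
  have hpi := Real.pi_pos
  have hx := abs_le.1 hB
  by_cases hm : 0 < m
  · have hmm : (m.natAbs : ℝ) = m := by rw [Nat.cast_natAbs, abs_of_pos hm]
    have hE1 : t⁻¹ ≤ ‖E‖ := by
      rw [htexp, ← Real.exp_neg, hn, hmm]
      apply Real.exp_le_exp.2; nlinarith
    have h2 : 2 ≤ t⁻¹ := by rw [le_inv_comm₀ (by norm_num) htpos]; linarith
    have h3 : ‖E‖ / 2 ≤ ‖E - 1‖ := by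
      have := norm_sub_norm_le E 1
      rw [norm_one] at this; linarith
    simp only [hm, if_true, add_zero]
    rw [gg, ← hE, norm_inv]
    calc ‖E - 1‖⁻¹ ≤ (t⁻¹ / 2)⁻¹ := inv_anti₀ (by positivity) (by linarith)
      _ = 2 * t := by field_simp
  · have hmm : (m.natAbs : ℝ) = -m := by
      rw [Nat.cast_natAbs, abs_of_nonpos (not_lt.1 hm)]; push_cast; ring
    have hE1 : ‖E‖ ≤ t := by
      rw [htexp, hn, hmm]
      apply Real.exp_le_exp.2; nlinarith
    have h3 : 1 / 2 ≤ ‖E - 1‖ := by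
      have := norm_sub_norm_le 1 E
      rw [norm_one, norm_sub_rev] at this; linarith
    have h4 : E - 1 ≠ 0 := by
      intro h; rw [h, norm_zero] at h3; linarith
    simp only [hm, if_false]
    have : gg (x - m * ω) + 1 = E / (E - 1) := by
      rw [gg, ← hE]; field_simp; ring
    rw [this, norm_div, div_le_iff₀ (by positivity)]
    nlinarith [norm_nonneg E]

lemma FF_decomp (a b z₀ : ℂ) : ∃ (S : Finset ℤ) (R : ℂ → ℂ), 0 ∈ S ∧ AnalyticAt ℂ R z₀ ∧
    ∀ᶠ z in 𝓝 z₀, FF a b z = ∑ m ∈ S, tm a b z m + R z := by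
  classical
  set B : ℝ := ‖z₀‖ + 1 + ‖a‖ + ‖b‖ with hB
  set C := Real.exp (2 * Real.pi * B)
  set r := Real.exp (-2 * Real.pi * ω.im) with hr
  have hr0 : 0 < r := Real.exp_pos _
  have hr1 : r < 1 := by
    rw [hr, Real.exp_lt_one_iff]; nlinarith [Real.pi_pos, omega_im_pos, mul_pos Real.pi_pos omega_im_pos]
  have hsum : Summable (fun m : ℤ => 4 * (C * r ^ m.natAbs)) := by
    have : Summable (fun m : ℤ => r ^ m.natAbs) := by
      apply Summable.of_nat_of_neg <;> simpa using summable_geometric_of_lt_one hr0.le hr1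
    exact (this.mul_left C).mul_left 4
  obtain ⟨M, hM⟩ : ∃ M : ℕ, ∀ k ≥ M, C * r ^ k ≤ 1 / 2 := by
    have : Tendsto (fun k : ℕ => C * r ^ k) atTop (𝓝 (C * 0)) :=
      (tendsto_pow_atTop_nhds_zero_of_lt_one hr0.le hr1).const_mul C
    rw [mul_zero] at this
    exact eventually_atTop.1 (this.eventually_le_const (by norm_num))
  let S : Finset ℤ := Finset.Icc (-(M : ℤ)) M
  have hS : ∀ m, m ∉ S → C * r ^ m.natAbs ≤ 1 / 2 := by
    intro m hm
    apply hM
    simp only [S, Finset.mem_Icc] at hm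
    omega
  let f : ℤ → ℂ → ℂ := fun m z => if m ∈ S then 0 else tm a b z m
  have him : ∀ z ∈ Metric.ball z₀ 1, ∀ c : ℂ, (c = a ∨ c = b) → |(z - c).im| ≤ B := by
    intro z hz c hc
    refine (Complex.abs_im_le_norm _).trans ((norm_sub_le _ _).trans ?_)
    rw [Metric.mem_ball, dist_eq_norm] at hz
    have h1 := norm_le_norm_add_norm_sub' z z₀
    rcases hc with rfl | rfl
    · linarith [norm_nonneg b]
    · linarith [norm_nonneg a]
  have hfb : ∀ m z, z ∈ Metric.ball z₀ 1 → ‖f m z‖ ≤ 4 * (C * r ^ m.natAbs) := by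
    intro m z hz
    by_cases hm : m ∈ S
    · simp only [f, hm, if_true, norm_zero]; positivity
    · simp only [f, hm, if_false]
      have h1 := gg_bound (z - a) m B (him z hz a (Or.inl rfl)) (hS m hm)
      have h2 := gg_bound (z - b) m B (him z hz b (Or.inr rfl)) (hS m hm)
      have : tm a b z m = (gg (z - a - m * ω) + (if 0 < m then 0 else 1)) -
          (gg (z - b - m * ω) + (if 0 < m then 0 else 1)) := by rw [tm]; ring
      rw [this]
      refine (norm_sub_le _ _).trans ?_
      linarith
  have hfd : ∀ m, DifferentiableOn ℂ (f m) (Metric.ball z₀ 1) := by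
    intro m
    by_cases hm : m ∈ S
    · have : f m = fun _ => 0 := by ext z; simp [f, hm]
      rw [this]; exact differentiableOn_const _
    · have : f m = fun z => gg (z - (a + m * ω)) - gg (z - (b + m * ω)) := by
        ext z; simp only [f, hm, if_false, tm]; ring_nf
      rw [this]
      have key : ∀ c : ℂ, (c = a ∨ c = b) → ∀ z ∈ Metric.ball z₀ 1,
          ¬ ∃ n : ℤ, z - (c + m * ω) = n := by
        rintro c hc z hz ⟨n, hn⟩
        have h1 := gg_bound (z - c) m B (him z hz c hc) (hS m hm)
        -- im part
        have h5 : z - c = m * ω + n := by rw [← hn]; ring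
        have h6 : (z - c).im = m * ω.im := by rw [h5]; simp
        have h7 := him z hz c hc
        rw [h6, abs_mul, abs_of_pos omega_im_pos] at h7
        have h8 := hS m hm
        have h9 : C * r ^ m.natAbs = Real.exp (2 * Real.pi * (B - |(m : ℝ)| * ω.im)) := by
          simp only [C, hr]
          rw [← Real.exp_nat_mul, ← Real.exp_add, Nat.cast_natAbs, Int.cast_abs]; ring_nf
        rw [h9] at h8
        have h10 : 1 ≤ Real.exp (2 * Real.pi * (B - |(m : ℝ)| * ω.im)) := by
          apply Real.one_le_exp
          have := Real.pi_pos
          have : 0 ≤ B - |(m : ℝ)| * ω.im := by linarith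
          positivity
        linarith
      intro z hz
      exact ((gg_analytic _ z (key a (Or.inl rfl) z hz)).sub
        (gg_analytic _ z (key b (Or.inr rfl) z hz))).differentiableAt.differentiableWithinAt
  have hR := Complex.differentiableOn_tsum_of_summable_norm hsum hfd Metric.isOpen_ball hfb
  refine ⟨S, fun z => ∑' m, f m z, by simp [S], hR.analyticAt (Metric.ball_mem_nhds _ one_pos), ?_⟩
  filter_upwards [Metric.ball_mem_nhds z₀ one_pos] with z hz
  have s1 : Summable (fun m => f m z) := Summable.of_norm_bounded hsum (fun m => hfb m z hz)
  have s2 : HasSum (fun m => if m ∈ S then tm a b z m else 0) (∑ m ∈ S, tm a b z m) := by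
    have := hasSum_sum_of_ne_finset_zero (f := fun m => if m ∈ S then tm a b z m else 0) (s := S)
      (L := SummationFilter.unconditional ℤ)
      (fun m hm => by simp [hm])
    convert this using 1
    exact Finset.sum_congr rfl fun m hm => by simp [hm]
  have s3 := s2.add s1.hasSum
  rw [FF, ← s3.tsum_eq]
  congr 1; ext1 m
  by_cases hm : m ∈ S <;> simp [f, hm]

lemma eq_of_punct {h₁ h₂ : ℂ → ℂ} {z₀ : ℂ} (c₁ : ContinuousAt h₁ z₀) (c₂ : ContinuousAt h₂ z₀)
    (h : ∀ᶠ z in 𝓝[≠] z₀, h₁ z = h₂ z) : h₁ z₀ = h₂ z₀ :=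
  tendsto_nhds_unique_of_eventuallyEq (c₁.tendsto.mono_left nhdsWithin_le_nhds)
    (c₂.tendsto.mono_left nhdsWithin_le_nhds) h

lemma punct_punct {P : ℂ → Prop} {z₀ : ℂ} (h : ∀ᶠ z in 𝓝[≠] z₀, P z) :
    ∀ᶠ z in 𝓝[≠] z₀, ∀ᶠ y in 𝓝 z, P y := by
  have := eventually_eventually_nhdsWithin.2 h
  filter_upwards [this, self_mem_nhdsWithin] with z hz hne
  rwa [IsOpen.nhdsWithin_eq isOpen_compl_singleton hne] at hz

lemma lem_reg (f : ℂ → ℂ)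
    (hf : ∀ z₀, ∃ g, AnalyticAt ℝ g z₀ ∧ ∀ᶠ z in 𝓝[≠] z₀, f z = g z) :
    ∃ F, RealAnalytic F ∧ ∀ z₀, ∀ᶠ z in 𝓝[≠] z₀, F z = f z := by
  choose g hg hfg using hf
  have key : ∀ z₀, (fun z => g z z) =ᶠ[𝓝 z₀] g z₀ := by
    intro z₀
    have : ∀ᶠ z in 𝓝[≠] z₀, g z z = g z₀ z := by
      filter_upwards [punct_punct (hfg z₀), (hg z₀).eventually_analyticAt.filter_mono
        nhdsWithin_le_nhds] with z h1 h2
      refine eq_of_punct (hg z).continuousAt h2.continuousAt ?_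
      filter_upwards [hfg z, h1.filter_mono nhdsWithin_le_nhds] with y e1 e2
      rw [← e1, ← e2]
    rw [eventually_nhdsWithin_iff] at this
    filter_upwards [this] with z hz
    by_cases h : z = z₀
    · rw [h]
    · exact hz h
  refine ⟨fun z => g z z, fun z₀ => (hg z₀).congr (key z₀).symm, fun z₀ => ?_⟩
  filter_upwards [hfg z₀, (key z₀).filter_mono nhdsWithin_le_nhds] with z h1 h2
  rw [h1]; exact h2

lemma shift_punct {P : ℂ → Prop} {z₀ : ℂ} (γ : ℂ) (h : ∀ᶠ z in 𝓝[≠] (z₀ + γ), P z) :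
    ∀ᶠ z in 𝓝[≠] z₀, P (z + γ) := by
  have : Tendsto (fun z : ℂ => z + γ) (𝓝[≠] z₀) (𝓝[≠] (z₀ + γ)) := by
    refine tendsto_nhdsWithin_of_tendsto_nhds_of_eventually_within _ ?_ ?_
    · exact ((continuous_add_const γ).tendsto z₀).mono_left nhdsWithin_le_nhds
    · filter_upwards [self_mem_nhdsWithin] with z hz
      simpa using hz
  exact this.eventually h

lemma lem_mem (U : ℂ → ℂ) (hUan : RealAnalytic U) (α p : ℂ) (u : (ℂ → ℂ) × (ℂ → ℂ))
    (hu : memVp U α p u) (Φ : ℂ → ℂ) (hper : ∀ γ, inΛ γ → ∀ z, Φ (z + γ) = Φ z)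
    (hmer : ∀ z, MeromorphicAt Φ z)
    (e₁ : ∀ z₀, ∃ g, AnalyticAt ℝ g z₀ ∧ ∀ᶠ z in 𝓝[≠] z₀, Φ z * u.1 z = g z)
    (e₂ : ∀ z₀, ∃ g, AnalyticAt ℝ g z₀ ∧ ∀ᶠ z in 𝓝[≠] z₀, Φ z * u.2 z = g z) :
    ∃ v, memVp U α p v ∧ (∀ z₀, ∀ᶠ z in 𝓝[≠] z₀, v.1 z = Φ z * u.1 z) ∧
      (∀ z₀, ∀ᶠ z in 𝓝[≠] z₀, v.2 z = Φ z * u.2 z) := by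
  obtain ⟨v₁, hv₁, f₁⟩ := lem_reg _ e₁
  obtain ⟨v₂, hv₂, f₂⟩ := lem_reg _ e₂
  obtain ⟨hu₁, hu₂, p₁, p₂, q₁, q₂⟩ := hu
  have hD : ∀ (w v : ℂ → ℂ), RealAnalytic w →
      (∀ z₀, ∀ᶠ z in 𝓝[≠] z₀, v z = Φ z * w z) → ∀ z₀, ∀ᶠ z in 𝓝[≠] z₀,
      Dbar2 v z = Φ z * Dbar2 w z := by
    intro w v hw hv z₀
    filter_upwards [punct_punct (hv z₀), (hmer z₀).eventually_analyticAt] with z h1 h2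
    rw [Dbar2_congr h1, Dbar2_mul (h2.differentiableAt.restrictScalars ℝ) (hw z).differentiableAt,
      Dbar2_holo h2.differentiableAt]
    ring
  have hUn : ∀ z, ContinuousAt (fun z => U (-z)) z := fun z =>
    ContinuousAt.comp (g := U) (hUan (-z)).continuousAt continuous_neg.continuousAt
  refine ⟨(v₁, v₂), ⟨hv₁, hv₂, fun z => ?_, fun z => ?_, fun γ hγ z => ?_, fun γ hγ z => ?_⟩, f₁, f₂⟩
  · refine eq_of_punct (h₁ := fun z => Dbar2 v₁ z + α * U z * v₂ z) (h₂ := fun _ => 0)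
      ((ra_Dbar2_at (hv₁ z)).continuousAt.add
        ((continuousAt_const.mul (hUan z).continuousAt).mul (hv₂ z).continuousAt))
      continuousAt_const ?_
    filter_upwards [hD _ _ hu₁ f₁ z, f₂ z] with y h1 h2
    rw [h1, h2]; linear_combination Φ y * p₁ y
  · refine eq_of_punct (h₁ := fun z => α * U (-z) * v₁ z + Dbar2 v₂ z) (h₂ := fun _ => 0)
      (((continuousAt_const.mul (hUn z)).mul (hv₁ z).continuousAt).add
        (ra_Dbar2_at (hv₂ z)).continuousAt)
      continuousAt_const ?_
    filter_upwards [hD _ _ hu₂ f₂ z, f₁ z] with y h1 h2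
    rw [h1, h2]; linear_combination Φ y * p₂ y
  · refine eq_of_punct (h₁ := fun z => v₁ (z + γ)) (h₂ := fun z => _ * v₁ z)
      (ContinuousAt.comp (g := v₁) (hv₁ _).continuousAt (continuous_add_const γ).continuousAt)
      (continuousAt_const.mul (hv₁ z).continuousAt) ?_
    filter_upwards [f₁ z, shift_punct γ (f₁ (z + γ))] with y h1 h2
    rw [h1, h2, hper γ hγ, q₁ γ hγ]; ring
  · refine eq_of_punct (h₁ := fun z => v₂ (z + γ)) (h₂ := fun z => _ * v₂ z)
      (ContinuousAt.comp (g := v₂) (hv₂ _).continuousAt (continuous_add_const γ).continuousAt)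
      (continuousAt_const.mul (hv₂ z).continuousAt) ?_
    filter_upwards [f₂ z, shift_punct γ (f₂ (z + γ))] with y h1 h2
    rw [h1, h2, hper γ hγ, q₂ γ hγ]; ring

lemma tm_eq (a b z : ℂ) (m : ℤ) : tm a b z m = gg (z - (a + m * ω)) - gg (z - (b + m * ω)) := by
  rw [tm]; ring_nf

lemma FF_mero (a b z₀ : ℂ) : MeromorphicAt (FF a b) z₀ := by
  obtain ⟨S, R, -, hR, h⟩ := FF_decomp a b z₀
  have : MeromorphicAt (fun z => ∑ m ∈ S, tm a b z m + R z) z₀ := by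
    refine MeromorphicAt.add (f := fun z => ∑ m ∈ S, tm a b z m) ?_ hR.meromorphicAt
    refine MeromorphicAt.fun_sum fun m _ => ?_
    simp only [tm_eq]
    exact (gg_mero _ _).sub (gg_mero _ _)
  refine this.congr ?_
  filter_upwards [h.filter_mono nhdsWithin_le_nhds] with z hz
  exact hz.symm

lemma gg_lim0 (c z₀ : ℂ) (h : ¬ ∃ n : ℤ, z₀ - c = n) :
    Tendsto (fun z => (z - z₀) * gg (z - c)) (𝓝[≠] z₀) (𝓝 0) := by
  have h1 := (gg_analytic c z₀ h).continuousAt.tendsto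
  have h2 : Tendsto (fun z => z - z₀) (𝓝 z₀) (𝓝 0) := by
    have : Continuous (fun z : ℂ => z - z₀) := by fun_prop
    simpa using this.tendsto z₀
  simpa using (h2.mul h1).mono_left nhdsWithin_le_nhds

lemma FF_lim (a b z₀ : ℂ) (A B : ℤ → ℂ)
    (hA : ∀ m : ℤ, Tendsto (fun z => (z - z₀) * gg (z - (a + m * ω))) (𝓝[≠] z₀) (𝓝 (A m)))
    (hB : ∀ m : ℤ, Tendsto (fun z => (z - z₀) * gg (z - (b + m * ω))) (𝓝[≠] z₀) (𝓝 (B m))) :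
    ∃ S : Finset ℤ, 0 ∈ S ∧
      Tendsto (fun z => (z - z₀) * FF a b z) (𝓝[≠] z₀) (𝓝 (∑ m ∈ S, (A m - B m))) := by
  obtain ⟨S, R, h0, hR, h⟩ := FF_decomp a b z₀
  refine ⟨S, h0, ?_⟩
  have h2 : Tendsto (fun z => z - z₀) (𝓝 z₀) (𝓝 0) := by
    have : Continuous (fun z : ℂ => z - z₀) := by fun_prop
    simpa using this.tendsto z₀
  have h3 : Tendsto (fun z => (z - z₀) * R z) (𝓝[≠] z₀) (𝓝 0) := by
    simpa using (h2.mul hR.continuousAt.tendsto).mono_left nhdsWithin_le_nhds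
  have h4 := (tendsto_finsetSum S fun m _ => (hA m).sub (hB m)).add h3
  rw [add_zero] at h4
  refine h4.congr' ?_
  filter_upwards [h.filter_mono nhdsWithin_le_nhds] with z hz
  rw [hz, mul_add, Finset.mul_sum]
  congr 1
  refine Finset.sum_congr rfl fun m _ => ?_
  rw [tm_eq]; ring

lemma not_int {a z₀ : ℂ} (h : ¬ inΛ (z₀ - a)) (m : ℤ) : ¬ ∃ n : ℤ, z₀ - (a + m * ω) = n := by
  rintro ⟨n, hn⟩
  exact h ⟨m, n, by rw [← hn]; ring⟩

lemma FF_lim_reg (a b z₀ : ℂ) (ha : ¬ inΛ (z₀ - a)) (hb : ¬ inΛ (z₀ - b)) :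
    Tendsto (fun z => (z - z₀) * FF a b z) (𝓝[≠] z₀) (𝓝 0) := by
  obtain ⟨S, -, h⟩ := FF_lim a b z₀ (fun _ => 0) (fun _ => 0)
    (fun m => gg_lim0 _ _ (not_int ha m)) (fun m => gg_lim0 _ _ (not_int hb m))
  simpa using h

lemma FF_lim_pole (a b : ℂ) (hb : ¬ inΛ (a - b)) :
    ∃ k : ℂ, k ≠ 0 ∧ Tendsto (fun z => (z - a) * FF a b z) (𝓝[≠] a) (𝓝 k) := by
  classical
  obtain ⟨k, hk, hk0, hkz⟩ := gg_pole a a ⟨0, by simp⟩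
  obtain ⟨S, h0, h⟩ := FF_lim a b a (fun m => if m = 0 then k a else 0) (fun _ => 0)
    (fun m => by
      by_cases hm : m = 0
      · subst hm
        simp only [if_true, Int.cast_zero, zero_mul, add_zero]
        refine (hk.continuousAt.tendsto.mono_left nhdsWithin_le_nhds).congr' ?_
        filter_upwards [hkz] with z hz
        exact hz.symm
      · simp only [hm, if_false]
        refine gg_lim0 _ _ ?_
        rintro ⟨n, hn⟩
        refine hm (int_of_mul_omega m (-n) ?_)
        push_cast; rw [← hn]; ring) (fun m => gg_lim0 _ _ (not_int hb m))
  refine ⟨k a, hk0, ?_⟩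
  simpa [h0] using h

lemma FF_ext (a b : ℂ) (u : ℂ → ℂ) (hu : RealAnalytic u)
    (hd : ∀ z₀, (inΛ (z₀ - a) ∨ inΛ (z₀ - b)) → ∃ w : ℂ → ℂ, AnalyticAt ℝ w z₀ ∧
      ∀ᶠ z in 𝓝 z₀, u z = (z - z₀) * w z) (z₀ : ℂ) :
    ∃ g, AnalyticAt ℝ g z₀ ∧ ∀ᶠ z in 𝓝[≠] z₀, FF a b z * u z = g z := by
  obtain ⟨S, R, -, hR, h⟩ := FF_decomp a b z₀
  have key : ∀ c, (c = a ∨ c = b) → ∀ m : ℤ, ∃ g, AnalyticAt ℝ g z₀ ∧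
      ∀ᶠ z in 𝓝[≠] z₀, gg (z - (c + m * ω)) * u z = g z := by
    intro c hc m
    by_cases hn : ∃ n : ℤ, z₀ - (c + m * ω) = n
    · obtain ⟨k, hk, -, hkz⟩ := gg_pole _ _ hn
      obtain ⟨n, hn⟩ := hn
      have hL : inΛ (z₀ - c) := ⟨m, n, by rw [← hn]; ring⟩
      obtain ⟨w, hw, hwz⟩ := hd z₀ (by rcases hc with rfl | rfl <;> simp [hL])
      refine ⟨fun z => k z * w z, (hk.restrictScalars (𝕜 := ℝ)).mul hw, ?_⟩
      filter_upwards [hkz, hwz.filter_mono nhdsWithin_le_nhds] with z h1 h2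
      rw [h2, ← h1]; ring
    · exact ⟨_, ((gg_analytic _ _ hn).restrictScalars (𝕜 := ℝ)).mul (hu z₀),
        Eventually.of_forall fun z => rfl⟩
  choose g₁ hg₁ hz₁ using key a (Or.inl rfl)
  choose g₂ hg₂ hz₂ using key b (Or.inr rfl)
  refine ⟨fun z => ∑ m ∈ S, (g₁ m z - g₂ m z) + R z * u z, ?_, ?_⟩
  · exact (Finset.analyticAt_fun_sum S fun m _ => (hg₁ m).sub (hg₂ m)).add
      ((hR.restrictScalars (𝕜 := ℝ)).mul (hu z₀))
  · have hall : ∀ᶠ z in 𝓝[≠] z₀, ∀ m ∈ S, gg (z - (a + m * ω)) * u z = g₁ m z ∧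
        gg (z - (b + m * ω)) * u z = g₂ m z := by
      rw [Filter.eventually_all_finset]
      exact fun m _ => (hz₁ m).and (hz₂ m)
    filter_upwards [hall, h.filter_mono nhdsWithin_le_nhds] with z h1 h2
    rw [h2, add_mul, Finset.sum_mul]
    congr 1
    refine Finset.sum_congr rfl fun m hm => ?_
    rw [tm_eq, sub_mul, (h1 m hm).1, (h1 m hm).2]

theorem stmt10 (U : ℂ → ℂ) (hUan : RealAnalytic U)
    (hU1 : ∀ γ : ℂ, inΛ γ → ∀ z : ℂ,
      U (z + γ) = Complex.exp (Complex.I * (pairing γ Kpt : ℂ)) * U z)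
    (hU2 : ∀ z : ℂ, U (ω * z) = ω * U z)
    (α p : ℂ) (u : (ℂ → ℂ) × (ℂ → ℂ)) (hu : memVp U α p u)
    (hune : ¬ (∀ z : ℂ, u.1 z = 0 ∧ u.2 z = 0))
    (n : ℕ) (zpts : Fin n → ℂ)
    (hnc : ∀ i j : Fin n, i ≠ j → ¬ inΛ (zpts i - zpts j))
    (hvan : ∀ i : Fin n, u.1 (zpts i) = 0 ∧ u.2 (zpts i) = 0) :
    ∃ v : Fin n → (ℂ → ℂ) × (ℂ → ℂ),
      (∀ i : Fin n, memVp U α p (v i)) ∧ LinearIndependent ℂ v := by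
  cases n with
  | zero => exact ⟨fun i => i.elim0, fun i => i.elim0, linearIndependent_empty_type⟩
  | succ n =>
  obtain ⟨hu₁, hu₂, p₁, p₂, q₁, q₂⟩ := id hu
  have hUn : RealAnalytic (fun z => U (-z)) := fun z =>
    AnalyticAt.comp (g := U) (hUan (-z)) analyticAt_id.neg
  have ha : RealAnalytic (fun z => -α * U z) := fun z => analyticAt_const.mul (hUan z)
  have hb : RealAnalytic (fun z => -α * U (-z)) := fun z => analyticAt_const.mul (hUn z)
  have d₁ : ∀ z, Dbar2 u.1 z = (-α * U z) * u.2 z := fun z => by linear_combination p₁ z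
  have d₂ : ∀ z, Dbar2 u.2 z = (-α * U (-z)) * u.1 z := fun z => by linear_combination p₂ z
  have hv0 : ∀ i z₀, inΛ (z₀ - zpts i) → u.1 z₀ = 0 ∧ u.2 z₀ = 0 := by
    intro i z₀ h
    have e : z₀ = zpts i + (z₀ - zpts i) := by ring
    constructor
    · rw [e, q₁ _ h, (hvan i).1, mul_zero]
    · rw [e, q₂ _ h, (hvan i).2, mul_zero]
  have hdiv₁ : ∀ i z₀, inΛ (z₀ - zpts i) → ∃ w : ℂ → ℂ, AnalyticAt ℝ w z₀ ∧
      ∀ᶠ z in 𝓝 z₀, u.1 z = (z - z₀) * w z := fun i z₀ h =>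
    lem_local u.1 u.2 _ _ z₀ hu₁ hu₂ ha hb d₁ d₂ (hv0 i z₀ h).1 (hv0 i z₀ h).2
  have hdiv₂ : ∀ i z₀, inΛ (z₀ - zpts i) → ∃ w : ℂ → ℂ, AnalyticAt ℝ w z₀ ∧
      ∀ᶠ z in 𝓝 z₀, u.2 z = (z - z₀) * w z := fun i z₀ h =>
    lem_local u.2 u.1 _ _ z₀ hu₂ hu₁ hb ha d₂ d₁ (hv0 i z₀ h).2 (hv0 i z₀ h).1
  let Φ : Fin (n + 1) → ℂ → ℂ := fun i => if i = 0 then fun _ => 1 else FF (zpts i) (zpts 0)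
  have hΦm : ∀ i z, MeromorphicAt (Φ i) z := by
    intro i z
    by_cases hi : i = 0
    · simp only [Φ, hi, if_true]; exact MeromorphicAt.const _ _
    · simp only [Φ, hi, if_false]; exact FF_mero _ _ _
  have hex : ∀ i, ∃ v, memVp U α p v ∧ (∀ z₀, ∀ᶠ z in 𝓝[≠] z₀, v.1 z = Φ i z * u.1 z) ∧
      (∀ z₀, ∀ᶠ z in 𝓝[≠] z₀, v.2 z = Φ i z * u.2 z) := by
    intro i
    by_cases hi : i = 0
    · refine ⟨u, hu, fun z₀ => ?_, fun z₀ => ?_⟩ <;> simp [Φ, hi]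
    · refine lem_mem U hUan α p u hu (Φ i) ?_ (hΦm i) ?_ ?_
      · simp only [Φ, hi, if_false]
        exact fun γ hγ z => FF_per _ _ _ _ hγ
      · simp only [Φ, hi, if_false]
        exact FF_ext _ _ _ hu₁ (fun z₀ h => h.elim (hdiv₁ i z₀) (hdiv₁ 0 z₀))
      · simp only [Φ, hi, if_false]
        exact FF_ext _ _ _ hu₂ (fun z₀ h => h.elim (hdiv₂ i z₀) (hdiv₂ 0 z₀))
  choose v hv hv₁ hv₂ using hex
  refine ⟨v, hv, ?_⟩
  rw [Fintype.linearIndependent_iff]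
  intro c hc
  -- the meromorphic combination vanishes near every point
  have hzero : ∀ z₀, ∀ᶠ z in 𝓝[≠] z₀, ∑ i, c i * Φ i z = 0 := by
    intro z₀
    have hm : MeromorphicAt (fun z => ∑ i, c i * Φ i z) z₀ :=
      MeromorphicAt.fun_sum fun i _ => (MeromorphicAt.const _ _).mul (hΦm i z₀)
    refine hm.eventually_eq_zero_or_eventually_ne_zero.resolve_right fun hne => hune ?_
    have g₁ : ∀ᶠ z in 𝓝[≠] z₀, (∑ i, c i * Φ i z) * u.1 z = 0 := by
      filter_upwards [eventually_all.2 fun i => hv₁ i z₀] with z hz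
      have := congrFun (congrArg Prod.fst hc) z
      simp only [Prod.fst_sum, Prod.smul_fst, Finset.sum_apply, Pi.smul_apply, smul_eq_mul, hz,
        Prod.fst_zero, Pi.zero_apply] at this
      rw [Finset.sum_mul, ← this]
      exact Finset.sum_congr rfl fun i _ => by ring
    have g₂ : ∀ᶠ z in 𝓝[≠] z₀, (∑ i, c i * Φ i z) * u.2 z = 0 := by
      filter_upwards [eventually_all.2 fun i => hv₂ i z₀] with z hz
      have := congrFun (congrArg Prod.snd hc) z
      simp only [Prod.snd_sum, Prod.smul_snd, Finset.sum_apply, Pi.smul_apply, smul_eq_mul, hz,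
        Prod.snd_zero, Pi.zero_apply] at this
      rw [Finset.sum_mul, ← this]
      exact Finset.sum_congr rfl fun i _ => by ring
    have fin : ∀ w : ℂ → ℂ, RealAnalytic w → (∀ᶠ z in 𝓝[≠] z₀, (∑ i, c i * Φ i z) * w z = 0) →
        ∀ z, w z = 0 := by
      intro w hw hz z
      have h1 : ∀ᶠ z in 𝓝[≠] z₀, w z = 0 := by
        filter_upwards [hz, hne] with z h1 h2
        exact (mul_eq_zero.1 h1).resolve_left h2
      obtain ⟨y, hy⟩ := (punct_punct h1).exists
      have := AnalyticOnNhd.eq_of_eventuallyEq (𝕜 := ℝ) (f := w) (g := fun _ => 0)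
        (fun x _ => hw x) (fun x _ => analyticAt_const) hy
      exact congrFun this z
    exact fun z => ⟨fin _ hu₁ g₁ z, fin _ hu₂ g₂ z⟩
  have hci : ∀ i, i ≠ 0 → c i = 0 := by
    intro i hi
    obtain ⟨k, hk0, hk⟩ := FF_lim_pole (zpts i) (zpts 0) (hnc i 0 hi)
    have hl : ∀ j, Tendsto (fun z => c j * ((z - zpts i) * Φ j z)) (𝓝[≠] (zpts i))
        (𝓝 (c j * (if j = i then k else 0))) := by
      intro j
      refine Tendsto.const_mul _ ?_
      by_cases hj : j = 0
      · have : j ≠ i := fun h => hi (h ▸ hj)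
        rw [if_neg this]
        simp only [Φ, hj, if_true, mul_one]
        have : Continuous (fun z : ℂ => z - zpts i) := by fun_prop
        simpa using (this.tendsto (zpts i)).mono_left nhdsWithin_le_nhds
      · simp only [Φ, hj, if_false]
        by_cases hji : j = i
        · subst hji; simpa using hk
        · simp only [hji, if_false]
          exact FF_lim_reg _ _ _ (hnc i j (Ne.symm hji)) (hnc i 0 hi)
    have hs := tendsto_finsetSum Finset.univ fun j _ => hl j
    have h0 : Tendsto (fun z => ∑ j, c j * ((z - zpts i) * Φ j z)) (𝓝[≠] (zpts i)) (𝓝 0) := by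
      refine tendsto_const_nhds.congr' ?_
      filter_upwards [hzero (zpts i)] with z hz
      have : ∑ j, c j * ((z - zpts i) * Φ j z) = (z - zpts i) * ∑ j, c j * Φ j z := by
        rw [Finset.mul_sum]; exact Finset.sum_congr rfl fun j _ => by ring
      rw [this, hz, mul_zero]
    have := tendsto_nhds_unique hs h0
    simpa [hk0] using this
  intro i
  by_cases hi : i = 0
  · subst hi
    obtain ⟨z, hz⟩ := (hzero 0).exists
    rw [Finset.sum_eq_single 0 (fun j _ hj => by rw [hci j hj, zero_mul]) (by simp)] at hz
    simpa [Φ] using hz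
  · exact hci i hi

end
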